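/- Every B-diagram G with |G| = n ≥ 1 can be written as a composition over a one-vertex B-diagram: there exist a B-diagram V = (1, [p], E_v↑, E_v↓, ∅) with one vertex, a B-diagram G̃ with |G̃| = n − 1, an integer k ≥ 0, a strictly increasing sequence a₁ < ⋯ < a_k of elements of H_f↑(V) and pairwise distinct elements b₁,…,b_k of H_f↓(G̃), such that G equals the composition of G̃ over V along (a₁,…,a_k; b₁,…,b_k). -/

import Mathlib

open scoped BigOperators

structure BD where
  lam : List ℕ
  up : Finset ℕ
  dn : Finset ℕ
  ed : Finset (ℕ × ℕ)
deriving DecidableEq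

namespace BD

/-- number of vertices -/
def nv (G : BD) : ℕ := G.lam.length

/-- number of half-edges -/
def omega (G : BD) : ℕ := G.lam.sum

/-- the vertex to which a half-edge belongs -/
def v (G : BD) (k : ℕ) : ℕ :=
  (List.range G.lam.length).countP (fun i => (G.lam.take i).sum < k)

def Valid (G : BD) : Prop :=
  (∀ x ∈ G.lam, 0 < x) ∧
  G.up ⊆ Finset.Icc 1 G.omega ∧
  G.dn ⊆ Finset.Icc 1 G.omega ∧
  (∀ p ∈ G.ed, p.1 ∈ G.up ∧ p.2 ∈ G.dn ∧ G.v p.1 < G.v p.2) ∧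
  (∀ p ∈ G.ed, ∀ q ∈ G.ed, p.1 = q.1 → p = q) ∧
  (∀ p ∈ G.ed, ∀ q ∈ G.ed, p.2 = q.2 → p = q)

def eps : BD := ⟨[], ∅, ∅, ∅⟩

theorem eps_valid : eps.Valid := by
  refine ⟨?_, ?_, ?_, ?_, ?_, ?_⟩ <;> simp [eps, Valid, omega]

def HfUp (G : BD) : Finset ℕ := G.up \ G.ed.image Prod.fst
def HfDn (G : BD) : Finset ℕ := G.dn \ G.ed.image Prod.snd
def hfUp (G : BD) : ℕ := G.HfUp.card
def hfDn (G : BD) : ℕ := G.HfDn.card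
def hc (G : BD) : ℕ :=
  (G.omega - G.ed.card - G.hfUp) + (G.omega - G.ed.card - G.hfDn)

/-- composition of `G'` over `G` along a matching `s` -/
def comp (G G' : BD) (s : Finset (ℕ × ℕ)) : BD where
  lam := G.lam ++ G'.lam
  up := G.up ∪ G'.up.image (· + G.omega)
  dn := G.dn ∪ G'.dn.image (· + G.omega)
  ed := G.ed ∪ s.image (fun p => (p.1, p.2 + G.omega)) ∪
        G'.ed.image (fun p => (p.1 + G.omega, p.2 + G.omega))

/-- `s` encodes a strictly increasing sequence `a₁ < ⋯ < a_k` of elements of `H_f↑(G)`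
matched with pairwise distinct elements `b₁,…,b_k` of `H_f↓(G')`. -/
def Matching (G G' : BD) (s : Finset (ℕ × ℕ)) : Prop :=
  (∀ p ∈ s, p.1 ∈ G.HfUp ∧ p.2 ∈ G'.HfDn) ∧
  (∀ p ∈ s, ∀ q ∈ s, p.1 = q.1 → p = q) ∧
  (∀ p ∈ s, ∀ q ∈ s, p.2 = q.2 → p = q)

open scoped Classical in
noncomputable def matchings (G G' : BD) : Finset (Finset (ℕ × ℕ)) :=
  (G.HfUp ×ˢ G'.HfDn).powerset.filter (fun s => Matching G G' s)

/-- juxtaposition -/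
def juxt (G G' : BD) : BD := comp G G' ∅

def Indiv (G : BD) : Prop :=
  ∀ G₁ G₂ : BD, G₁.Valid → G₂.Valid → G = juxt G₁ G₂ → G₁ = G ∨ G₂ = G

/-- half-edges attached to the vertices in `I` -/
def HI (G : BD) (I : Finset ℕ) : Finset ℕ :=
  (Finset.Icc 1 G.omega).filter (fun k => G.v k ∈ I)

/-- the increasing relabelling bijection -/
def phi (G : BD) (I : Finset ℕ) (k : ℕ) : ℕ := ((G.HI I).filter (· ≤ k)).card

/-- sub-B-diagram on the set of vertices `I` -/
def sub (G : BD) (I : Finset ℕ) : BD where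
  lam := ((List.range G.lam.length).filter (fun i => i + 1 ∈ I)).map (fun i => G.lam.getD i 0)
  up := (G.up ∩ G.HI I).image (G.phi I)
  dn := (G.dn ∩ G.HI I).image (G.phi I)
  ed := (G.ed.filter (fun p => G.v p.1 ∈ I ∧ G.v p.2 ∈ I)).image
          (fun p => (G.phi I p.1, G.phi I p.2))

def Isolated (G : BD) (I : Finset ℕ) : Prop :=
  ∀ p ∈ G.ed, (G.v p.1 ∈ I ↔ G.v p.2 ∈ I)

def Connected (G : BD) : Prop :=
  ∀ i j : ℕ, 1 ≤ i → i < j → j ≤ G.nv →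
    ∃ (k : ℕ) (c : Fin (k + 1) → ℕ × ℕ),
      (∀ ℓ, c ℓ ∈ G.ed) ∧
      (i = G.v (c 0).1 ∨ i = G.v (c 0).2) ∧
      (j = G.v (c (Fin.last k)).1 ∨ j = G.v (c (Fin.last k)).2) ∧
      ∀ ℓ : Fin k,
        G.v (c ℓ.castSucc).1 = G.v (c ℓ.succ).1 ∨ G.v (c ℓ.castSucc).1 = G.v (c ℓ.succ).2 ∨
        G.v (c ℓ.castSucc).2 = G.v (c ℓ.succ).1 ∨ G.v (c ℓ.castSucc).2 = G.v (c ℓ.succ).2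

def IsConnComp (G : BD) (I : Finset ℕ) : Prop :=
  I ⊆ Finset.Icc 1 G.nv ∧ I.Nonempty ∧ (G.sub I).Connected ∧
  ∀ J : Finset ℕ, I ⊆ J → J ⊆ Finset.Icc 1 G.nv → (G.sub J).Connected → J = I

end BD

theorem v_cons_aux (p : ℕ) (L : List ℕ) (u d : Finset ℕ) (e : Finset (ℕ × ℕ))
    (u' d' : Finset ℕ) (e' : Finset (ℕ × ℕ)) (k : ℕ) (hk : 1 ≤ k) :
    BD.v ⟨p :: L, u, d, e⟩ k = BD.v ⟨L, u', d', e'⟩ (k - p) + 1 := by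
  unfold BD.v
  simp only [List.length_cons, List.range_succ_eq_map, List.countP_cons, List.countP_map]
  have h0 : decide ((List.take 0 (p :: L)).sum < k) = true := by
    rw [decide_eq_true_eq]
    exact hk
  erw [if_pos h0]
  congr 1
  apply List.countP_congr
  intro x _
  have hx : (L.take x).sum + p < k ↔ (L.take x).sum < k - p := by omega
  have hy : ((p :: L).take (x + 1)).sum = (L.take x).sum + p := by
    rw [List.take_succ_cons, List.sum_cons, add_comm]
  rw [← hy] at hx
  refine Iff.trans ?_ (hx.trans ?_)
  · exact decide_eq_true_iff
  · exact decide_eq_true_iff.symm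

theorem v_zero_aux (G : BD) : G.v 0 = 0 := by
  unfold BD.v
  simp

/-- every B-diagram with at least one vertex is a composition of a
B-diagram `G'` with `n-1` vertices over a one-vertex B-diagram `V` (with no edges)
along some admissible matching. -/
theorem exists_comp_over_one_vertex (G : BD) (hG : G.Valid) (hn : 1 ≤ G.nv) :
    ∃ (V G' : BD) (s : Finset (ℕ × ℕ)),
      V.Valid ∧ G'.Valid ∧ V.nv = 1 ∧ V.ed = ∅ ∧ G'.nv = G.nv - 1 ∧
      BD.Matching V G' s ∧ G = BD.comp V G' s := by
  obtain ⟨lam, u, d, e⟩ := G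
  cases lam with
  | nil => simp [BD.nv] at hn
  | cons p L =>
  obtain ⟨h1, h2, h3, h4, h5, h6⟩ := hG
  simp only [BD.omega, List.sum_cons] at h1 h2 h3 h4 h5 h6
  have hu : ∀ x ∈ u, 1 ≤ x ∧ x ≤ p + L.sum := fun x hx => Finset.mem_Icc.1 (h2 hx)
  have hd : ∀ x ∈ d, 1 ≤ x ∧ x ≤ p + L.sum := fun x hx => Finset.mem_Icc.1 (h3 hx)
  have hv : ∀ u' d' e', ∀ q ∈ e, BD.v ⟨L, u', d', e'⟩ (q.1 - p) < BD.v ⟨L, u', d', e'⟩ (q.2 - p) := by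
    intro u' d' e' q hq
    obtain ⟨a, b, c⟩ := h4 q hq
    rw [v_cons_aux p L u d e u' d' e' _ (hu _ a).1, v_cons_aux p L u d e u' d' e' _ (hd _ b).1] at c
    omega
  have hq2 : ∀ q ∈ e, p < q.2 := by
    intro q hq
    by_contra hc
    have := hv ∅ ∅ ∅ q hq
    rw [show q.2 - p = 0 by omega, v_zero_aux] at this
    omega
  refine ⟨⟨[p], u.filter (· ≤ p), d.filter (· ≤ p), ∅⟩,
    ⟨L, (u.filter (p < ·)).image (· - p), (d.filter (p < ·)).image (· - p),
      (e.filter (fun q => p < q.1)).image (fun q => (q.1 - p, q.2 - p))⟩,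
    (e.filter (fun q => q.1 ≤ p)).image (fun q => (q.1, q.2 - p)), ?_, ?_, rfl, rfl, ?_, ?_, ?_⟩
  · refine ⟨?_, ?_, ?_, ?_, ?_, ?_⟩
    · intro x hx
      exact h1 x (by simp at hx; simp [hx])
    · intro x hx
      simp only [Finset.mem_filter] at hx
      simp only [BD.omega, List.sum_singleton, Finset.mem_Icc]
      exact ⟨(hu x hx.1).1, hx.2⟩
    · intro x hx
      simp only [Finset.mem_filter] at hx
      simp only [BD.omega, List.sum_singleton, Finset.mem_Icc]
      exact ⟨(hd x hx.1).1, hx.2⟩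
    all_goals simp
  · refine ⟨?_, ?_, ?_, ?_, ?_, ?_⟩
    · intro x hx
      exact h1 x (List.mem_cons_of_mem _ hx)
    · intro x hx
      simp only [Finset.mem_image, Finset.mem_filter] at hx
      obtain ⟨y, ⟨hy, hp⟩, rfl⟩ := hx
      have := hu y hy
      simp only [BD.omega, Finset.mem_Icc]
      omega
    · intro x hx
      simp only [Finset.mem_image, Finset.mem_filter] at hx
      obtain ⟨y, ⟨hy, hp⟩, rfl⟩ := hx
      have := hd y hy
      simp only [BD.omega, Finset.mem_Icc]
      omega
    · intro x hx
      simp only [Finset.mem_image, Finset.mem_filter] at hx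
      obtain ⟨y, ⟨hy, hp⟩, rfl⟩ := hx
      refine ⟨?_, ?_, hv _ _ _ y hy⟩
      · exact Finset.mem_image.2 ⟨y.1, Finset.mem_filter.2 ⟨(h4 y hy).1, hp⟩, rfl⟩
      · exact Finset.mem_image.2 ⟨y.2, Finset.mem_filter.2 ⟨(h4 y hy).2.1, hq2 y hy⟩, rfl⟩
    · intro x hx z hz hxz
      simp only [Finset.mem_image, Finset.mem_filter] at hx hz
      obtain ⟨y, ⟨hy, hp⟩, rfl⟩ := hx
      obtain ⟨w, ⟨hw, hp'⟩, rfl⟩ := hz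
      simp only at hxz
      rw [h5 y hy w hw (by omega)]
    · intro x hx z hz hxz
      simp only [Finset.mem_image, Finset.mem_filter] at hx hz
      obtain ⟨y, ⟨hy, hp⟩, rfl⟩ := hx
      obtain ⟨w, ⟨hw, hp'⟩, rfl⟩ := hz
      simp only at hxz
      have := hq2 y hy
      have := hq2 w hw
      rw [h6 y hy w hw (by omega)]
  · simp [BD.nv]
  · refine ⟨?_, ?_, ?_⟩
    · intro x hx
      simp only [Finset.mem_image, Finset.mem_filter] at hx
      obtain ⟨y, ⟨hy, hp⟩, rfl⟩ := hx
      constructor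
      · simp only [BD.HfUp, Finset.image_empty, Finset.sdiff_empty, Finset.mem_filter]
        exact ⟨(h4 y hy).1, hp⟩
      · simp only [BD.HfDn]
        rw [Finset.mem_sdiff]
        refine ⟨Finset.mem_image.2 ⟨y.2, Finset.mem_filter.2 ⟨(h4 y hy).2.1, hq2 y hy⟩, rfl⟩, ?_⟩
        intro hc
        simp only [Finset.mem_image, Finset.mem_filter] at hc
        obtain ⟨_, ⟨w, ⟨hw, hp'⟩, rfl⟩, hc⟩ := hc
        simp only at hc
        have := hq2 y hy
        have := hq2 w hw
        have := h6 y hy w hw (by omega)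
        subst this
        omega
    · intro x hx z hz hxz
      simp only [Finset.mem_image, Finset.mem_filter] at hx hz
      obtain ⟨y, ⟨hy, hp⟩, rfl⟩ := hx
      obtain ⟨w, ⟨hw, hp'⟩, rfl⟩ := hz
      rw [h5 y hy w hw hxz]
    · intro x hx z hz hxz
      simp only [Finset.mem_image, Finset.mem_filter] at hx hz
      obtain ⟨y, ⟨hy, hp⟩, rfl⟩ := hx
      obtain ⟨w, ⟨hw, hp'⟩, rfl⟩ := hz
      simp only at hxz
      have := hq2 y hy
      have := hq2 w hw
      rw [h6 y hy w hw (by omega)]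
  · have key : ∀ t : Finset ℕ, t = t.filter (· ≤ p) ∪ ((t.filter (p < ·)).image (· - p)).image (· + p) := by
      intro t
      ext x
      simp only [Finset.mem_union, Finset.mem_image, Finset.mem_filter]
      constructor
      · intro hx
        rcases le_or_gt x p with h | h
        · exact Or.inl ⟨hx, h⟩
        · exact Or.inr ⟨x - p, ⟨x, ⟨hx, h⟩, rfl⟩, by omega⟩
      · rintro (h | ⟨_, ⟨y, ⟨hy, hp⟩, rfl⟩, rfl⟩)
        · exact h.1
        · rwa [Nat.sub_add_cancel hp.le]
    simp only [BD.comp, BD.omega, List.sum_singleton, List.singleton_append, BD.mk.injEq, true_and]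
    refine ⟨key u, key d, ?_⟩
    ext ⟨x, y⟩
    simp only [Finset.empty_union, Finset.mem_union, Finset.mem_image, Finset.mem_filter]
    constructor
    · intro hx
      have h := hq2 _ hx
      simp only at h
      rcases le_or_gt x p with h' | h'
      · refine Or.inl ⟨_, ⟨(x, y), ⟨hx, h'⟩, rfl⟩, ?_⟩
        simp only [Prod.mk.injEq, true_and]
        omega
      · refine Or.inr ⟨_, ⟨(x, y), ⟨hx, h'⟩, rfl⟩, ?_⟩
        simp only [Prod.mk.injEq]
        omega
    · rintro (⟨_, ⟨w, ⟨hw, hp⟩, rfl⟩, h⟩ | ⟨_, ⟨w, ⟨hw, hp⟩, rfl⟩, h⟩)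
      · have := hq2 w hw
        simp only [Prod.mk.injEq] at h
        have : w = (x, y) := Prod.ext h.1 (by simp only; omega)
        exact this ▸ hw
      · have := hq2 w hw
        simp only [Prod.mk.injEq] at h
        have : w = (x, y) := Prod.ext (by simp only; omega) (by simp only; omega)
        exact this ▸ hw
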